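/- If G is a finite family of nonempty compact convex subsets of ℝ² such that every three members of G admit a common transversal line, then there exist four affine lines in ℝ² such that every member of G intersects at least one of them. -/

import Mathlib

open Set

noncomputable section

/-- The Euclidean plane. -/
abbrev Plane : Type := EuclideanSpace ℝ (Fin 2)

/-- The 2×2 determinant of two plane vectors. -/
def det2 (u v : Plane) : ℝ := u 0 * v 1 - u 1 * v 0

/-- A convex body in the plane: nonempty, compact and convex. -/
def ConvexBody2 (A : Set Plane) : Prop := A.Nonempty ∧ IsCompact A ∧ Convex ℝ A

/-- A family of sets is in convex position if removing any member changes the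
convex hull of the union of the family. -/
def ConvexPos (F : Set (Set Plane)) : Prop :=
  ∀ A ∈ F, convexHull ℝ (⋃₀ F) ≠ convexHull ℝ (⋃₀ (F \ {A}))

/-- A family is in general position if every 3-element subfamily is in convex position. -/
def GenPos (F : Set (Set Plane)) : Prop :=
  ∀ G ⊆ F, G.ncard = 3 → ConvexPos G

/-- Two sets are noncrossing if both set differences are connected. -/
def NoncrossingPair (A B : Set Plane) : Prop := IsConnected (A \ B) ∧ IsConnected (B \ A)

/-- Two convex bodies are tangent if they intersect but their interiors are disjoint. -/
def TangentBodies (A B : Set Plane) : Prop :=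
  (A ∩ B).Nonempty ∧ interior A ∩ interior B = ∅

/-- The line `{x | f x = c}` (for `f ≠ 0`) is tangent to `A`:
it meets `A` and `A` lies in one of the two closed half-planes it bounds. -/
def TangentLineTo (f : Plane →ₗ[ℝ] ℝ) (c : ℝ) (A : Set Plane) : Prop :=
  (∃ x ∈ A, f x = c) ∧ ((∀ x ∈ A, f x ≤ c) ∨ (∀ x ∈ A, c ≤ f x))

/-- No line is tangent to three distinct members of the family. -/
def NoTripleTangentLine (F : Set (Set Plane)) : Prop :=
  ∀ f : Plane →ₗ[ℝ] ℝ, f ≠ 0 → ∀ c : ℝ, ∀ A ∈ F, ∀ B ∈ F, ∀ C ∈ F,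
    A ≠ B → B ≠ C → A ≠ C →
    ¬ (TangentLineTo f c A ∧ TangentLineTo f c B ∧ TangentLineTo f c C)

/-- The ordered triple `(A₁, A₂, A₃)` is counterclockwise oriented. -/
def CCWOriented (A₁ A₂ A₃ : Set Plane) : Prop :=
  ∃ a₁ ∈ A₁ ∩ frontier (convexHull ℝ (A₁ ∪ A₂ ∪ A₃)),
  ∃ a₂ ∈ A₂ ∩ frontier (convexHull ℝ (A₁ ∪ A₂ ∪ A₃)),
  ∃ a₃ ∈ A₃ ∩ frontier (convexHull ℝ (A₁ ∪ A₂ ∪ A₃)),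
    0 < det2 (a₂ - a₁) (a₃ - a₁)

/-- The ordered triple `(A₁, A₂, A₃)` is clockwise oriented. -/
def CWOriented (A₁ A₂ A₃ : Set Plane) : Prop :=
  ∃ a₁ ∈ A₁ ∩ frontier (convexHull ℝ (A₁ ∪ A₂ ∪ A₃)),
  ∃ a₂ ∈ A₂ ∩ frontier (convexHull ℝ (A₁ ∪ A₂ ∪ A₃)),
  ∃ a₃ ∈ A₃ ∩ frontier (convexHull ℝ (A₁ ∪ A₂ ∪ A₃)),
    det2 (a₂ - a₁) (a₃ - a₁) < 0

/-- An affine line in the plane: an affine subspace with 1-dimensional direction. -/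
def IsLine (L : AffineSubspace ℝ Plane) : Prop := Module.finrank ℝ L.direction = 1

/-- `L` is a transversal line of the family `F`. -/
def TransversalLine (L : AffineSubspace ℝ Plane) (F : Set (Set Plane)) : Prop :=
  IsLine L ∧ ∀ A ∈ F, ((L : Set Plane) ∩ A).Nonempty

/-!
Following McGinnis and Zerbib, three lines are found among the main diagonals of a hexagon. Enclose
all members of the family in a disc and let the vertices of a hexagon move on its boundary circle;
the proportions in which they divide the circle form a point `x` of a simplex. If no member avoids
the three main diagonals of some such hexagon, these diagonals are the required lines. Otherwise,
for every `x`, some member lies inside one of the six sectors of the disc adjacent to the arcs. The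
sets `U i` of those `x` for which a member lies in the sector `i` are open, cover the simplex, and
miss the facets `x i = 0`, where the sector `i` degenerates. By the Knaster-Kuratowski-Mazurkiewicz
theorem, a single hexagon has members in all six sectors. A common transversal of the members in the
sectors `0`, `2`, `4` forces the triangle between the three diagonals to have one orientation, and a
common transversal of those in the sectors `1`, `3`, `5` forces the opposite one.

The covering theorem is deduced from Scarf's combinatorial lemma on finitely many linear orders,
which plays the role of Sperner's lemma and needs no triangulation of the simplex.
-/

section Scarf

open scoped Classical

variable {ι T α : Type*} [LinearOrder α] {u : ι → T → α} {τ S : Finset T} {a : ι} {z : T}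

/-- Scarf's dominant sets, for the finite family of orders on `T` given by the functions `u i`:
no point of `T` exceeds, in all the orders at once, the minimum of `S`. -/
def IsDominant (u : ι → T → α) (S : Finset T) : Prop :=
  ∀ y, ∃ i, ∀ x ∈ S, u i y ≤ u i x

/-- The point `y` exceeds the minimum of `τ` in every order, except perhaps the order `a`. -/
def ExceedsExcept (u : ι → T → α) (τ : Finset T) (a : ι) (y : T) : Prop :=
  ∀ i ≠ a, ∃ x ∈ τ, u i x < u i y

/-- The order `a` is redundant for `τ`: each element of `τ` is the minimum of `τ` in some
other order. -/
def IsRedundant (u : ι → T → α) (τ : Finset T) (a : ι) : Prop :=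
  ∀ x ∈ τ, ∃ i ≠ a, ∀ x' ∈ τ, u i x ≤ u i x'

/-- The exchange step of Scarf's argument: a redundant order `a` of `τ` singles out the point `z`
by which the dominant set `τ` can be enlarged, with `z` as its minimum in the order `a`. -/
structure IsPivot (u : ι → T → α) (τ : Finset T) (a : ι) (z : T) : Prop where
  redundant : IsRedundant u τ a
  exceeds : ExceedsExcept u τ a z
  le : ∀ y, ExceedsExcept u τ a y → u a y ≤ u a z

theorem IsDominant.mono (hS : IsDominant u S) (h : τ ⊆ S) : IsDominant u τ := fun y ↦
  (hS y).imp fun _ hi x hx ↦ hi x (h hx)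

theorem IsDominant.le_of_exceedsExcept (hτ : IsDominant u τ) (hz : ExceedsExcept u τ a z) :
    ∀ x ∈ τ, u a z ≤ u a x := by
  obtain ⟨i, hi⟩ := hτ z
  obtain rfl : i = a := by
    by_contra hia
    obtain ⟨x, hx, hlt⟩ := hz i hia
    exact (hi x hx).not_gt hlt
  exact hi

theorem exists_isPivot [Finite T] (ha : IsRedundant u τ a) {y : T} (hy : ExceedsExcept u τ a y) :
    ∃ z, IsPivot u τ a z := by
  obtain ⟨z, hz, hmax⟩ :=
    (Set.toFinite {y | ExceedsExcept u τ a y}).exists_maximalFor (u a) _ ⟨y, hy⟩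
  exact ⟨z, ha, hz, fun y hy ↦ (le_total (u a y) (u a z)).elim id (hmax hy)⟩

namespace IsPivot

theorem notMem (h : IsPivot u τ a z) : z ∉ τ := fun hz ↦ by
  obtain ⟨i, hia, hi⟩ := h.redundant z hz
  obtain ⟨x, hx, hlt⟩ := h.exceeds i hia
  exact (hi x hx).not_gt hlt

theorem isDominant_insert (h : IsPivot u τ a z) (hτ : IsDominant u τ) :
    IsDominant u (insert z τ) := fun y ↦ by
  by_cases hy : ExceedsExcept u τ a y
  · exact ⟨a, (Finset.forall_mem_insert ..).2 ⟨h.le y hy, hτ.le_of_exceedsExcept hy⟩⟩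
  · simp only [ExceedsExcept, not_forall, not_exists, not_and, not_lt] at hy
    obtain ⟨i, hia, hi⟩ := hy
    obtain ⟨x, hx, hlt⟩ := h.exceeds i hia
    exact ⟨i, (Finset.forall_mem_insert ..).2 ⟨(hi x hx).trans hlt.le, hi⟩⟩

theorem index_unique (hτ : IsDominant u τ) {b : ι} (ha : IsPivot u τ a z)
    (hb : IsPivot u τ b z) : a = b := by
  by_contra hab
  obtain ⟨x, hx, hlt⟩ := hb.exceeds a hab
  exact (hτ.le_of_exceedsExcept ha.exceeds x hx).not_gt hlt

theorem point_unique (hu : ∀ i, (u i).Injective) {w : T} (hz : IsPivot u τ a z)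
    (hw : IsPivot u τ a w) : z = w :=
  hu a ((hw.le z hz.exceeds).antisymm (hz.le w hw.exceeds))

end IsPivot

theorem IsDominant.exists_injective_isMin (hu : ∀ i, (u i).Injective) (hS : IsDominant u S) :
    ∃ m : S → ι, m.Injective ∧ ∀ x : S, ∀ x' ∈ S, u (m x) x ≤ u (m x) x' := by
  choose m hm using fun x : S ↦ hS x
  refine ⟨m, fun x y hxy ↦ Subtype.ext (hu (m x) ((hm x y y.2).antisymm ?_)), hm⟩
  simpa only [hxy] using hm y x x.2

theorem IsDominant.exists_isPivot_of_insert [Fintype ι] (hu : ∀ i, (u i).Injective)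
    (hz : z ∉ τ) (hcard : τ.card + 1 = Fintype.card ι) (h : IsDominant u (insert z τ)) :
    ∃ a, IsPivot u τ a z := by
  obtain ⟨m, hinj, hmin⟩ := h.exists_injective_isMin hu
  have hbij : m.Bijective := (Fintype.bijective_iff_injective_and_card m).2
    ⟨hinj, by rw [Fintype.card_coe, Finset.card_insert_of_notMem hz, hcard]⟩
  let z' : ↥(insert z τ) := ⟨z, Finset.mem_insert_self z τ⟩
  have hexceeds : ExceedsExcept u τ (m z') z := fun i hi ↦ by
    obtain ⟨x, rfl⟩ := hbij.2 i
    have hxz : (x : T) ≠ z := fun hx ↦ hi (congrArg m (Subtype.ext hx))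
    exact ⟨x, Finset.mem_of_mem_insert_of_ne x.2 hxz,
      (hmin x z z'.2).lt_of_ne fun he ↦ hxz (hu _ he)⟩
  refine ⟨m z', fun x hx ↦ ?_, hexceeds, fun y hy ↦ ?_⟩
  · let x' : ↥(insert z τ) := ⟨x, Finset.mem_insert_of_mem hx⟩
    refine ⟨m x', fun he ↦ hz ?_, fun y hy ↦ hmin x' y (Finset.mem_insert_of_mem hy)⟩
    rwa [← show x = z from congrArg Subtype.val (hinj he)]
  · obtain ⟨i, hi⟩ := h y
    obtain rfl : i = m z' := by
      by_contra him
      obtain ⟨x, hx, hlt⟩ := hy i him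
      exact (hi x (Finset.mem_insert_of_mem hx)).not_gt hlt
    exact hi z z'.2

theorem exists_insert_eq_of_card_add_one (h : τ ⊆ S) (hcard : τ.card + 1 = S.card) :
    ∃ z ∉ τ, insert z τ = S :=
  Finset.covBy_iff_exists_insert.1 (Finset.covBy_iff_card_sdiff_eq_one.2 ⟨h, by
    rw [Finset.card_sdiff_of_subset h]; omega⟩)

theorem IsDominant.card_completions [Fintype ι] [Fintype T] (hu : ∀ i, (u i).Injective)
    (hτ : IsDominant u τ) (hcard : τ.card + 1 = Fintype.card ι) :
    Finset.card {S : Finset T | (IsDominant u S ∧ S.card = Fintype.card ι) ∧ τ ⊆ S} =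
      Finset.card {a : ι | ∃ z, IsPivot u τ a z} := by
  symm
  choose pivot hpivot using fun (a : ι) (h : ∃ z, IsPivot u τ a z) ↦ h
  refine Finset.card_bij (fun a ha ↦ insert (pivot a (Finset.mem_filter.1 ha).2) τ)
    (fun a ha ↦ ?_) (fun a ha b hb hab ↦ ?_) (fun S hS ↦ ?_)
  · have hp := hpivot a (Finset.mem_filter.1 ha).2
    exact (Finset.mem_filter_univ _).2 ⟨⟨hp.isDominant_insert hτ,
      (Finset.card_insert_of_notMem hp.notMem).trans hcard⟩, Finset.subset_insert _ _⟩
  · have ha' := hpivot a (Finset.mem_filter.1 ha).2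
    have hb' := hpivot b (Finset.mem_filter.1 hb).2
    have hab' : pivot a _ = pivot b _ :=
      (Finset.mem_insert.1 (hab ▸ Finset.mem_insert_self _ _)).resolve_right ha'.notMem
    exact IsPivot.index_unique hτ ha' (hab' ▸ hb')
  · obtain ⟨⟨hdom, hScard⟩, hsub⟩ := (Finset.mem_filter.1 hS).2
    obtain ⟨z, hz, rfl⟩ := exists_insert_eq_of_card_add_one hsub (hcard.trans hScard.symm)
    obtain ⟨a, ha⟩ := hdom.exists_isPivot_of_insert hu hz hcard
    exact ⟨a, (Finset.mem_filter_univ _).2 ⟨z, ha⟩,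
      by rw [(hpivot a ⟨z, ha⟩).point_unique hu ha]⟩

theorem IsDominant.card_isRedundant [Fintype ι] (hu : ∀ i, (u i).Injective)
    (hτ : IsDominant u τ) (hne : τ.Nonempty) (hcard : τ.card + 1 = Fintype.card ι) :
    Finset.card {a | IsRedundant u τ a} = 2 := by
  obtain ⟨m, hinj, hmin⟩ := hτ.exists_injective_isMin hu
  obtain ⟨a, ha⟩ : ∃ a, Finset.univ.image m = {a}ᶜ := by
    have h : (Finset.univ.image m)ᶜ.card = 1 := by
      rw [Finset.card_compl, Finset.card_image_of_injective _ hinj, Finset.card_univ,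
        Fintype.card_coe]
      omega
    obtain ⟨a, ha⟩ := Finset.card_eq_one.1 h
    exact ⟨a, by rw [← ha, compl_compl]⟩
  have hma (x : τ) : m x ≠ a := by
    have := Finset.mem_image_of_mem m (Finset.mem_univ x)
    rwa [ha, Finset.mem_compl, Finset.mem_singleton] at this
  have hsurj {i : ι} (hi : i ≠ a) : ∃ x, m x = i := by
    simpa [ha, hi] using Finset.ext_iff.1 ha i
  obtain ⟨x₀, hx₀, hmin₀⟩ := τ.exists_min_image (u a) hne
  refine Finset.card_eq_two.2 ⟨a, m ⟨x₀, hx₀⟩, (hma _).symm, ?_⟩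
  ext i
  simp only [Finset.mem_filter_univ, Finset.mem_insert, Finset.mem_singleton]
  constructor
  · refine fun hi ↦ or_iff_not_imp_left.2 fun hia ↦ ?_
    obtain ⟨x, rfl⟩ := hsurj hia
    obtain ⟨j, hj, hjmin⟩ := hi x x.2
    obtain rfl : j = a := by
      by_contra hja
      obtain ⟨x', rfl⟩ := hsurj hja
      exact hj (congrArg m (Subtype.ext (hu _ ((hmin x' x x.2).antisymm (hjmin x' x'.2)))))
    exact congrArg m (Subtype.ext (hu _ ((hjmin x₀ hx₀).antisymm (hmin₀ x x.2))))
  · rintro (rfl | rfl) x hx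
    · exact ⟨m ⟨x, hx⟩, hma _, hmin ⟨x, hx⟩⟩
    · by_cases hxx : x = x₀
      · exact ⟨a, (hma _).symm, hxx ▸ hmin₀⟩
      · exact ⟨m ⟨x, hx⟩, fun h ↦ hxx (congrArg Subtype.val (hinj h)), hmin ⟨x, hx⟩⟩

theorem image_eq_and_subset_insert_iff {c : T → ι} {x y : T} {ρ : Finset T}
    (hinj : Set.InjOn c τ) (hx : x ∉ τ) (hy : y ∈ τ) (hxy : c x = c y) :
    (ρ.card = τ.card ∧ ρ.image c = τ.image c) ∧ ρ ⊆ insert x τ ↔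
      ρ = τ ∨ ρ = insert x (τ.erase y) := by
  have hne : x ≠ y := fun h ↦ hx (h ▸ hy)
  constructor
  · rintro ⟨⟨hcard, himage⟩, hsub⟩
    obtain ⟨z, hz, hins⟩ := exists_insert_eq_of_card_add_one hsub
      (by rw [Finset.card_insert_of_notMem hx, hcard])
    have hρ : ρ = (insert x τ).erase z := by rw [← hins, Finset.erase_insert hz]
    have hρinj : Set.InjOn c ρ := by
      rw [← Finset.card_image_iff, himage, Finset.card_image_iff.2 hinj, hcard]
    by_cases hzx : z = x
    · exact .inl (by rw [hρ, hzx, Finset.erase_insert hx])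
    by_cases hzy : z = y
    · exact .inr (by rw [hρ, hzy, Finset.erase_insert_of_ne hne])
    have hmem {w : T} (hw : w ∈ insert x τ) (hwz : w ≠ z) : w ∈ ρ :=
      Finset.mem_of_mem_insert_of_ne (hins ▸ hw) hwz
    exact absurd (hρinj (hmem (Finset.mem_insert_self x τ) (Ne.symm hzx))
      (hmem (Finset.mem_insert_of_mem hy) (Ne.symm hzy)) hxy) hne
  · rintro (rfl | rfl)
    · exact ⟨⟨rfl, rfl⟩, Finset.subset_insert _ _⟩
    · refine ⟨⟨?_, ?_⟩, Finset.insert_subset_insert _ (Finset.erase_subset _ _)⟩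
      · rw [Finset.card_insert_of_notMem (fun h ↦ hx (Finset.mem_of_mem_erase h)),
          Finset.card_erase_add_one hy]
      · rw [Finset.image_insert, hxy, ← Finset.image_insert, Finset.insert_erase hy]

theorem even_card_facets_image_eq_compl_singleton [Fintype ι] [Fintype T] {c : T → ι} (b : ι)
    (hcard : S.card = Fintype.card ι) (hS : S.image c ≠ Finset.univ) :
    Even (Finset.card
      {τ : Finset T | (τ.card + 1 = Fintype.card ι ∧ τ.image c = {b}ᶜ) ∧ τ ⊆ S}) := by
  obtain hempty | ⟨τ, hτ⟩ := Finset.eq_empty_or_nonempty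
    {τ : Finset T | (τ.card + 1 = Fintype.card ι ∧ τ.image c = {b}ᶜ) ∧ τ ⊆ S}
  · simp only [hempty, Finset.card_empty, Even.zero]
  obtain ⟨⟨hτcard, hτc⟩, hτS⟩ := (Finset.mem_filter_univ _).1 hτ
  obtain ⟨x, hx, rfl⟩ := exists_insert_eq_of_card_add_one hτS (hτcard.trans hcard.symm)
  have hxb : c x ≠ b := fun h ↦ hS (by
    rw [Finset.image_insert, hτc, h, Finset.insert_eq, Finset.union_compl])
  have hinj : Set.InjOn c τ := by
    rw [← Finset.card_image_iff, hτc, Finset.card_compl, Finset.card_singleton]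
    omega
  -- The colour of `x` occurs once more, at `y`; a facet has to omit one of these two points.
  obtain ⟨y, hy, hyx⟩ : ∃ y ∈ τ, c y = c x := by
    rw [← Finset.mem_image, hτc, Finset.mem_compl, Finset.mem_singleton]
    exact hxb
  suffices Finset.card {τ' : Finset T | (τ'.card + 1 = Fintype.card ι ∧ τ'.image c = {b}ᶜ) ∧
      τ' ⊆ insert x τ} = 2 from this ▸ even_two
  refine Finset.card_eq_two.2 ⟨τ, insert x (τ.erase y),
    fun h ↦ hx (h ▸ Finset.mem_insert_self _ _), Finset.ext fun ρ ↦ ?_⟩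
  rw [Finset.mem_insert, Finset.mem_singleton, Finset.mem_filter_univ, ← hτcard, ← hτc,
    add_left_inj, image_eq_and_subset_insert_iff hinj hx hy hyx.symm]

section Corners

/-- The points `s i` are corners for the orders `u i`: the point `s i` is the minimum in the
order `i`, and in every other order it lies above all points that are not corners. -/
structure IsCorners (u : ι → T → α) (s : ι → T) : Prop where
  le : ∀ i x, u i (s i) ≤ u i x
  lt : ∀ i j x, j ≠ i → x ∉ Set.range s → u i x < u i (s j)

variable {s : ι → T} {c : T → ι} {b : ι}

theorem IsCorners.isDominant_image_compl [Fintype ι] (hs : IsCorners u s) (b : ι) :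
    IsDominant u (({b}ᶜ : Finset ι).image s) := fun y ↦ by
  simp only [Finset.forall_mem_image, Finset.mem_compl, Finset.mem_singleton]
  by_cases hy : y ∈ Set.range s
  · obtain ⟨j, rfl⟩ := hy
    exact ⟨j, fun i _ ↦ hs.le j _⟩
  · exact ⟨b, fun i hi ↦ (hs.lt b i y hi hy).le⟩

theorem IsCorners.exists_isPivot_iff [Fintype ι] [Finite T] (hu : ∀ i, (u i).Injective)
    (hs : IsCorners u s) (hinj : s.Injective) (a : ι) :
    (∃ z, IsPivot u (({b}ᶜ : Finset ι).image s) a z) ↔ a = b := by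
  constructor
  · rintro ⟨z, hred, hz, -⟩
    by_contra hab
    simp only [ExceedsExcept, IsRedundant, Finset.forall_mem_image, Finset.exists_mem_image,
      Finset.mem_compl, Finset.mem_singleton] at hred hz
    obtain ⟨k, hkb, hk⟩ := hz b (Ne.symm hab)
    obtain ⟨j, rfl⟩ : z ∈ Set.range s := by
      by_contra hzs
      exact (hs.lt b k z hkb hzs).not_gt hk
    obtain rfl : j = a := by
      by_contra hja
      obtain ⟨i, -, hi⟩ := hz j hja
      exact (hs.le j _).not_gt hi
    obtain ⟨i, hij, hi⟩ := hred hab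
    by_cases hib : i = b
    · subst hib
      exact (hi hkb).not_gt hk
    · exact hij (hinj (hu i ((hs.le i _).antisymm (hi hib))))
  · rintro rfl
    refine exists_isPivot (y := s a) ?_ fun i hi ↦
      ⟨s i, Finset.mem_image_of_mem s (by simpa using hi), (hs.le i _).lt_of_ne fun h ↦
        hi (hinj (hu i h))⟩
    simp only [IsRedundant, Finset.forall_mem_image, Finset.mem_compl, Finset.mem_singleton]
    exact fun i hi ↦ ⟨i, hi, fun j _ ↦ hs.le i _⟩

theorem IsCorners.exceedsExcept [Fintype ι] (hs : IsCorners u s) (hc : ∀ i, c (s i) = i)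
    (hτ : τ.image c = {b}ᶜ) (hne : τ ≠ ({b}ᶜ : Finset ι).image s) (a : ι) :
    ExceedsExcept u τ a (s a) := by
  by_contra h
  simp only [ExceedsExcept, not_forall, not_exists, not_and, not_lt] at h
  obtain ⟨i, hia, hi⟩ := h
  have hrange : ∀ x ∈ τ, s (c x) = x := fun x hx ↦ by
    obtain ⟨j, rfl⟩ : x ∈ Set.range s := by
      by_contra hxs
      exact (hs.lt i a x (Ne.symm hia) hxs).not_ge (hi x hx)
    rw [hc]
  apply hne
  rw [← hτ, Finset.image_image]
  exact (Finset.image_id.symm.trans (Finset.image_congr fun x hx ↦ (hrange x hx).symm))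

theorem IsCorners.even_card_completions [Fintype ι] [Fintype T] (hu : ∀ i, (u i).Injective)
    (hs : IsCorners u s) (hc : ∀ i, c (s i) = i) (hdom : IsDominant u τ)
    (hcard : τ.card + 1 = Fintype.card ι) (hτ : τ.image c = {b}ᶜ)
    (hne : τ ≠ ({b}ᶜ : Finset ι).image s) :
    Even (Finset.card {S : Finset T | (IsDominant u S ∧ S.card = Fintype.card ι) ∧ τ ⊆ S}) := by
  have hnonempty : τ.Nonempty := by
    rw [Finset.nonempty_iff_ne_empty]
    rintro rfl
    exact hne (by rw [← hτ, Finset.image_empty, Finset.image_empty])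
  have hpivot (a : ι) : (∃ z, IsPivot u τ a z) ↔ IsRedundant u τ a :=
    ⟨fun ⟨_, h⟩ ↦ h.redundant, fun h ↦ exists_isPivot h (hs.exceedsExcept hc hτ hne a)⟩
  simp only [hdom.card_completions hu hcard, hpivot, hdom.card_isRedundant hu hnonempty hcard,
    even_two]

/-- Rooms and doors: the dominant sets of full size are the rooms, and the doors are their facets
that bear all colours but `b`. A room that lacks a colour has an even number of doors, whereas all
doors but one lead to an even number of rooms. -/
theorem IsCorners.exists_isDominant_image_eq_univ [Fintype ι] [Finite T] [Nonempty ι]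
    (hu : ∀ i, (u i).Injective) (hs : IsCorners u s) (hc : ∀ i, c (s i) = i) :
    ∃ S : Finset T, IsDominant u S ∧ S.image c = Finset.univ := by
  have := Fintype.ofFinite T
  by_contra! hno
  obtain ⟨b⟩ := ‹Nonempty ι›
  let rooms : Finset (Finset T) := {S | IsDominant u S ∧ S.card = Fintype.card ι}
  let doors : Finset (Finset T) :=
    {τ | IsDominant u τ ∧ τ.card + 1 = Fintype.card ι ∧ τ.image c = {b}ᶜ}
  have hinj : s.Injective := Function.LeftInverse.injective hc
  have hrooms : Even (∑ S ∈ rooms, (doors.filter (· ⊆ S)).card) := by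
    refine Finset.even_sum _ fun S hS ↦ ?_
    obtain ⟨hdom, hcard⟩ := (Finset.mem_filter_univ _).1 hS
    have hfacets : doors.filter (· ⊆ S) = Finset.univ.filter fun τ ↦
        (τ.card + 1 = Fintype.card ι ∧ τ.image c = {b}ᶜ) ∧ τ ⊆ S := by
      ext τ
      simp only [doors, Finset.mem_filter, Finset.mem_univ, true_and]
      exact ⟨fun h ↦ ⟨h.1.2, h.2⟩, fun h ↦ ⟨⟨hdom.mono h.2, h.1⟩, h.2⟩⟩
    simpa only [hfacets] using even_card_facets_image_eq_compl_singleton b hcard (hno S hdom)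
  have hdoors : Odd (∑ τ ∈ doors, (rooms.filter (τ ⊆ ·)).card) := by
    have hmem : ({b}ᶜ : Finset ι).image s ∈ doors := by
      refine (Finset.mem_filter_univ _).2 ⟨hs.isDominant_image_compl b, ?_, ?_⟩
      · rw [Finset.card_image_of_injective _ hinj, Finset.card_compl, Finset.card_singleton]
        exact Nat.sub_add_cancel Fintype.card_pos
      · rw [Finset.image_image, show c ∘ s = id from funext hc, Finset.image_id]
    rw [← Finset.add_sum_erase _ _ hmem]
    obtain ⟨hdom, hcard, -⟩ := (Finset.mem_filter_univ _).1 hmem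
    refine Odd.add_even ?_ (Finset.even_sum _ fun τ hτ ↦ ?_)
    · have hone : Finset.card {a | ∃ z, IsPivot u (({b}ᶜ : Finset ι).image s) a z} = 1 :=
        Finset.card_eq_one.2 ⟨b, Finset.ext fun a ↦ by
          simp only [Finset.mem_filter_univ, Finset.mem_singleton, hs.exists_isPivot_iff hu hinj]⟩
      simp only [rooms, Finset.filter_filter, hdom.card_completions hu hcard, hone, odd_one]
    · obtain ⟨hne, hτ⟩ := Finset.mem_erase.1 hτ
      obtain ⟨hdom, hcard, hτc⟩ := (Finset.mem_filter_univ _).1 hτ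
      simpa only [rooms, Finset.filter_filter] using
        hs.even_card_completions hu hc hdom hcard hτc hne
  exact Nat.not_even_iff_odd.2 hdoors
    ((Finset.sum_card_bipartiteAbove_eq_sum_card_bipartiteBelow (s := doors) (t := rooms)
      (· ⊆ ·)).symm ▸ hrooms)

end Corners

/-- Values of the order `i` on `T` together with one additional corner for each index: the corner
`i` is put below everything and the other corners above everything. -/
def cornerValue (u : ι → T → α) (i : ι) : T ⊕ ι → WithBot (WithTop α)
  | .inl t => ((u i t : WithTop α) : WithBot (WithTop α))
  | .inr j => if j = i then ⊥ else ⊤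

theorem isCorners_inr {β : Type*} [LinearOrder β] (u : ι → T → α) (e : T ⊕ ι → β) :
    IsCorners (fun i x ↦ toLex (cornerValue u i x, e x)) Sum.inr where
  le i x := by
    rw [Prod.Lex.toLex_le_toLex]
    obtain t | j := x
    · exact .inl (by simp [cornerValue])
    · by_cases hj : j = i
      · exact .inr ⟨by rw [hj], by rw [hj]⟩
      · exact .inl (by simp [cornerValue, hj])
  lt i j x hji hx := by
    obtain t | j := x
    · exact Prod.Lex.toLex_lt_toLex.2 (.inl (by
        simpa [cornerValue, hji] using WithBot.coe_lt_coe.2 (WithTop.coe_lt_top (u i t))))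
    · exact absurd ⟨j, rfl⟩ hx

/-- Scarf's lemma, with ties allowed: they are broken by an enumeration. -/
theorem exists_finset_forall_exists_color_le [Finite ι] [Nonempty ι] [Finite T] (u : ι → T → α)
    (c : T → ι) :
    ∃ σ : Finset T, ∀ y, ∃ x ∈ σ, ∀ x' ∈ σ, u (c x) y ≤ u (c x) x' := by
  have := Fintype.ofFinite ι
  have := Fintype.ofFinite T
  let e := Fintype.equivFin (T ⊕ ι)
  obtain ⟨S, hdom, hS⟩ := (isCorners_inr u e).exists_isDominant_image_eq_univ
    (c := Sum.elim c id)
    (fun i x y hxy ↦ e.injective (congrArg (fun p ↦ (ofLex p).2) hxy)) fun _ ↦ rfl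
  refine ⟨S.preimage Sum.inl Sum.inl_injective.injOn, fun y ↦ ?_⟩
  obtain ⟨i, hi⟩ := hdom (.inl y)
  have hle : ∀ x ∈ S, cornerValue u i (.inl y) ≤ cornerValue u i x := fun x hx ↦
    Prod.Lex.monotone_fst _ _ (hi x hx)
  obtain ⟨t | j, hxS, rfl⟩ := Finset.mem_image.1 (hS ▸ Finset.mem_univ i)
  · refine ⟨t, Finset.mem_preimage.2 hxS, fun x' hx' ↦ ?_⟩
    simpa [cornerValue] using hle _ (Finset.mem_preimage.1 hx')
  · simpa [cornerValue] using hle _ hxS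

end Scarf

section KKM

variable {ι : Type*} [Fintype ι]

theorem one_lt_sum_of_net {N : Set (ι → ℝ)} {η : ℝ}
    (hN : ∀ p ∈ stdSimplex ℝ ι, ∃ y ∈ N, dist p y < η) {C : Finset ι} (hC : C.Nonempty)
    {μ : ι → ℝ} (hμ : ∀ i ∈ C, 0 ≤ μ i + η) (hdom : ∀ y ∈ N, ∃ i ∈ C, y i ≤ μ i) :
    1 < ∑ i ∈ C, (μ i + η) := by
  classical
  by_contra! hsum
  obtain ⟨k, -⟩ := hC
  let p : ι → ℝ := fun i ↦
    (if i ∈ C then μ i + η else 0) + if i = k then 1 - ∑ i ∈ C, (μ i + η) else 0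
  have hp_nonneg (i : ι) : (0 : ℝ) ≤ if i = k then 1 - ∑ i ∈ C, (μ i + η) else 0 := by
    split_ifs
    exacts [sub_nonneg.2 hsum, le_rfl]
  have hp : p ∈ stdSimplex ℝ ι := by
    refine ⟨fun i ↦ add_nonneg ?_ (hp_nonneg i), ?_⟩
    · split_ifs with hi
      exacts [hμ i hi, le_rfl]
    · simp [p, Finset.sum_add_distrib, Finset.sum_ite_mem]
  obtain ⟨y, hy, hpy⟩ := hN p hp
  obtain ⟨i, hi, hyi⟩ := hdom y hy
  have hpi : μ i + η ≤ p i := by simpa [p, hi] using hp_nonneg i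
  linarith [le_abs_self (p i - y i), dist_le_pi_dist p y i, Real.dist_eq (p i) (y i)]

theorem one_sub_lt_sum_of_net {N : Set (ι → ℝ)} {η : ℝ} (hη : 0 ≤ η)
    (hN : ∀ p ∈ stdSimplex ℝ ι, ∃ y ∈ N, dist p y < η) {C : Finset ι} (hC : C.Nonempty)
    {μ : ι → ℝ} (hμ : ∀ i ∈ C, 0 ≤ μ i) (hdom : ∀ y ∈ N, ∃ i ∈ C, y i ≤ μ i) :
    1 - Fintype.card ι * η < ∑ i ∈ C, μ i := by
  have h := one_lt_sum_of_net hN hC (fun i hi ↦ add_nonneg (hμ i hi) hη) hdom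
  rw [Finset.sum_add_distrib, Finset.sum_const, nsmul_eq_mul] at h
  have hcard : (C.card : ℝ) * η ≤ Fintype.card ι * η := by
    gcongr
    exact Finset.card_le_univ C
  linarith

theorem exists_finset_forall_color_le (c : (ι → ℝ) → ι) {η : ℝ} (hη : 0 < η) :
    ∃ N : Set (ι → ℝ), (∀ p ∈ stdSimplex ℝ ι, ∃ y ∈ N, dist p y < η) ∧
      ∃ σ : Finset (ι → ℝ), ↑σ ⊆ stdSimplex ℝ ι ∧
        ∀ y ∈ N, ∃ x ∈ σ, ∀ x' ∈ σ, y (c x) ≤ x' (c x) := by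
  classical
  have : Nonempty ι := ⟨c 0⟩
  obtain ⟨N, hNsub, hNfin, hN⟩ := (isCompact_stdSimplex ℝ ι).finite_cover_balls hη
  have := hNfin.to_subtype
  obtain ⟨σ, hσ⟩ := exists_finset_forall_exists_color_le (fun i (y : N) ↦ (y : ι → ℝ) i)
    fun y ↦ c y
  refine ⟨N, fun p hp ↦ ?_, σ.map (.subtype _), fun x hx ↦ ?_, fun y hy ↦ ?_⟩
  · simpa using hN hp
  · obtain ⟨x, -, rfl⟩ := Finset.mem_map.1 hx
    exact hNsub x.2
  · obtain ⟨x, hx, hle⟩ := hσ ⟨y, hy⟩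
    exact ⟨x, Finset.mem_map_of_mem _ hx, by simpa only [Finset.forall_mem_map] using! hle⟩

theorem exists_small_finset_stdSimplex [DecidableEq ι] (c : (ι → ℝ) → ι) {ε : ℝ} (hε : 0 < ε) :
    ∃ σ : Finset (ι → ℝ), σ.Nonempty ∧ ↑σ ⊆ stdSimplex ℝ ι ∧
      (∀ x ∈ σ, ∀ x' ∈ σ, ∀ i, x i < x' i + ε) ∧ ∀ x ∈ σ, ∀ i ∉ σ.image c, x i < ε := by
  have : Nonempty ι := ⟨c 0⟩
  have hcard : (0 : ℝ) < Fintype.card ι := Nat.cast_pos.2 Fintype.card_pos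
  have hη : 0 < ε / Fintype.card ι := by positivity
  obtain ⟨N, hN, σ, hσ, hdom⟩ := exists_finset_forall_color_le c hη
  have hne : σ.Nonempty := by
    obtain ⟨p, hp⟩ := (inferInstance : Nonempty (stdSimplex ℝ ι))
    obtain ⟨y, hy, -⟩ := hN p hp
    exact (hdom y hy).imp fun _ h ↦ h.1
  set μ : ι → ℝ := fun i ↦ σ.inf' hne (· i)
  have hμ {x} (hx : x ∈ σ) (i) : μ i ≤ x i := σ.inf'_le _ hx
  have hsum : 1 - ε < ∑ i ∈ σ.image c, μ i := by
    have h := one_sub_lt_sum_of_net hη.le hN (hne.image c) (μ := μ)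
      (fun i _ ↦ (σ.le_inf'_iff ..).2 fun x hx ↦ (hσ hx).1 i)
      fun y hy ↦ (hdom y hy).elim fun x hx ↦ ⟨c x, Finset.mem_image_of_mem c hx.1,
        (σ.le_inf'_iff ..).2 hx.2⟩
    rwa [mul_div_cancel₀ ε hcard.ne'] at h
  have hle {x} (hx : x ∈ σ) (i) : x i + ∑ j ∈ (σ.image c).erase i, μ j ≤ 1 :=
    calc x i + ∑ j ∈ (σ.image c).erase i, μ j
        ≤ x i + ∑ j ∈ (σ.image c).erase i, x j := by gcongr; exact hμ hx _
      _ = ∑ j ∈ insert i ((σ.image c).erase i), x j :=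
        (Finset.sum_insert (Finset.notMem_erase i _)).symm
      _ ≤ ∑ j, x j := Finset.sum_le_univ_sum_of_nonneg (hσ hx).1
      _ = 1 := (hσ hx).2
  have hout {x} (hx : x ∈ σ) {i} (hi : i ∉ σ.image c) : x i < ε := by
    have := hle hx i
    rw [Finset.erase_eq_of_notMem hi] at this
    linarith
  refine ⟨σ, hne, hσ, fun x hx x' hx' i ↦ ?_, fun x hx i ↦ hout hx⟩
  by_cases hi : i ∈ σ.image c
  · linarith [hle hx i, hμ hx' i, Finset.add_sum_erase _ μ hi]
  · linarith [hout hx hi, (hσ hx').1 i]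

theorem exists_mem_stdSimplex_dist_le [Nontrivial ι] {x : ι → ℝ} (hx : x ∈ stdSimplex ℝ ι)
    (i : ι) : ∃ y ∈ stdSimplex ℝ ι, y i = 0 ∧ dist x y ≤ x i := by
  classical
  obtain ⟨j, hji⟩ := exists_ne i
  have hx0 := hx.1 i
  refine ⟨x + Pi.single j (x i) - Pi.single i (x i), ⟨fun k ↦ ?_, ?_⟩, by simp [hji.symm],
    (dist_pi_le_iff hx0).2 fun k ↦ ?_⟩
  · obtain rfl | hki := eq_or_ne k i
    · simp [hji.symm]
    · have hsingle : (0 : ι → ℝ) ≤ Pi.single j (x i) := Pi.single_nonneg.2 hx0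
      simpa [hki] using add_nonneg (hx.1 k) (hsingle k)
  · simp [Finset.sum_add_distrib, hx.2]
  · obtain rfl | hki := eq_or_ne k i
    · simp [hji.symm, abs_of_nonneg hx0]
    · obtain rfl | hkj := eq_or_ne k j
      · simp [hki, abs_of_nonneg hx0]
      · simp [hki, hkj, hx0]

theorem exists_mem_stdSimplex_forall_mem_of_isOpen [Nonempty ι] {U : ι → Set (ι → ℝ)}
    (hU : ∀ i, IsOpen (U i)) (hcover : stdSimplex ℝ ι ⊆ ⋃ i, U i)
    (hface : ∀ i, ∀ x ∈ stdSimplex ℝ ι, x ∈ U i → 0 < x i) :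
    ∃ x ∈ stdSimplex ℝ ι, ∀ i, x ∈ U i := by
  classical
  by_contra! hno
  choose! c hc using hno
  obtain ⟨δ, hδ, hball⟩ := lebesgue_number_lemma_of_metric (isCompact_stdSimplex ℝ ι) hU hcover
  obtain ⟨σ, ⟨x, hx⟩, hσ, hsmall, hout⟩ := exists_small_finset_stdSimplex c hδ
  obtain ⟨i, hi⟩ := hball x (hσ hx)
  by_cases hiσ : i ∈ σ.image c
  · obtain ⟨y, hy, rfl⟩ := Finset.mem_image.1 hiσ
    refine hc y (hσ hy) (hi ?_)
    rw [Metric.mem_ball, dist_pi_lt_iff hδ]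
    intro j
    rw [Real.dist_eq, abs_sub_lt_iff]
    exact ⟨by linarith [hsmall y hy x hx j], by linarith [hsmall x hx y hy j]⟩
  · have : Nontrivial ι := ⟨c x, i, fun h ↦ hiσ (h ▸ Finset.mem_image_of_mem c hx)⟩
    obtain ⟨y, hy, hyi, hdist⟩ := exists_mem_stdSimplex_dist_le (hσ hx) i
    refine (hface i y hy (hi ?_)).ne' hyi
    rw [Metric.mem_ball, dist_comm]
    exact hdist.trans_lt (hout x hx i hiσ)

end KKM

section Geometry

open Real
open scoped RealInnerProductSpace

/-- The point of the unit circle at angle `φ`, used as a unit normal vector. -/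
def circlePoint (φ : ℝ) : Plane := !₂[cos φ, sin φ]

theorem inner_circlePoint (φ : ℝ) (w : Plane) :
    ⟪circlePoint φ, w⟫ = cos φ * w 0 + sin φ * w 1 := by
  simp [circlePoint, PiLp.inner_apply, Fin.sum_univ_two, mul_comm]

theorem inner_circlePoint_circlePoint (α β : ℝ) :
    ⟪circlePoint α, circlePoint β⟫ = cos (α - β) := by
  rw [inner_circlePoint, cos_sub]
  rfl

theorem norm_circlePoint (φ : ℝ) : ‖circlePoint φ‖ = 1 := by
  simp [circlePoint, EuclideanSpace.norm_eq, Fin.sum_univ_two]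

theorem circlePoint_add_pi (φ : ℝ) : circlePoint (φ + π) = -circlePoint φ := by
  ext i
  fin_cases i <;> simp [circlePoint]

theorem continuous_circlePoint : Continuous circlePoint := by
  unfold circlePoint
  fun_prop

theorem sin_mul_inner_circlePoint (α β γ : ℝ) (w : Plane) :
    sin (γ - α) * ⟪circlePoint β, w⟫ =
      sin (γ - β) * ⟪circlePoint α, w⟫ + sin (β - α) * ⟪circlePoint γ, w⟫ := by
  simp only [inner_circlePoint, sin_sub]
  ring

theorem inner_circlePoint_pos_of_le_of_le {α β γ : ℝ} (hαβ : α ≤ β) (hβγ : β ≤ γ)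
    (hγ : γ ≤ α + π) {w : Plane} (hα_pos : 0 < ⟪circlePoint α, w⟫)
    (hγ_pos : 0 < ⟪circlePoint γ, w⟫) : 0 < ⟪circlePoint β, w⟫ := by
  obtain rfl | hαβ := hαβ.eq_or_lt
  · exact hα_pos
  obtain rfl | hγ := hγ.eq_or_lt
  · rw [circlePoint_add_pi, inner_neg_left] at hγ_pos
    linarith
  refine pos_of_mul_pos_right ?_ (sin_pos_of_pos_of_lt_pi (x := γ - α) ?_ ?_).le
  · rw [sin_mul_inner_circlePoint]
    have hβγ_sin : 0 ≤ sin (γ - β) := sin_nonneg_of_nonneg_of_le_pi (by linarith) (by linarith)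
    have hαβ_sin : 0 < sin (β - α) := sin_pos_of_pos_of_lt_pi (by linarith) (by linarith)
    positivity
  all_goals linarith

/-- The chord joining the points at angles `α ≤ β` of the circle of radius `R` about the origin, as
the affine function that vanishes on it and is negative on the side of the arc from `α` to `β`.
For `α = β` the chord is a tangent. -/
def chord (R α β : ℝ) (z : Plane) : ℝ := R * cos ((β - α) / 2) - ⟪circlePoint ((α + β) / 2), z⟫

variable {R α β γ : ℝ} {z : Plane}

theorem chord_eq_inner (R α β : ℝ) (z : Plane) :
    chord R α β z = ⟪circlePoint ((α + β) / 2), R • circlePoint α - z⟫ := by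
  rw [chord, inner_sub_right, real_inner_smul_right, inner_circlePoint_circlePoint]
  ring_nf

theorem chord_add_two_pi (R α β : ℝ) (z : Plane) : chord R β (α + 2 * π) z = -chord R α β z := by
  have hcos : (α + 2 * π - β) / 2 = π - (β - α) / 2 := by ring
  have hmid : (β + (α + 2 * π)) / 2 = (α + β) / 2 + π := by ring
  rw [chord, chord, hcos, hmid, cos_pi_sub, circlePoint_add_pi, inner_neg_left]
  ring

theorem chord_pos_of_le (hz : ‖z‖ < R) (hαβ : α ≤ β) (hβγ : β ≤ γ) (hγ : γ ≤ α + 2 * π)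
    (h : 0 < chord R α γ z) : 0 < chord R α β z := by
  rw [chord_eq_inner] at h ⊢
  refine inner_circlePoint_pos_of_le_of_le (α := α) (by linarith) (by linarith) (by linarith) ?_ h
  have hinner : ⟪circlePoint α, z⟫ ≤ ‖z‖ := by
    simpa only [norm_circlePoint, one_mul] using real_inner_le_norm (circlePoint α) z
  rw [inner_sub_right, real_inner_smul_right, real_inner_self_eq_norm_sq, norm_circlePoint]
  linarith

theorem convex_chord_neg (R α β : ℝ) : Convex ℝ {z | chord R α β z < 0} := by
  simp only [chord, sub_neg]
  exact convex_halfSpace_gt (innerₗ Plane (circlePoint ((α + β) / 2))).isLinear _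

theorem convex_chord_pos (R α β : ℝ) : Convex ℝ {z | 0 < chord R α β z} := by
  simp only [chord, sub_pos]
  exact convex_halfSpace_lt (innerₗ Plane (circlePoint ((α + β) / 2))).isLinear _

theorem exists_isLine_forall_mem_iff {v : Plane} (hv : v ≠ 0) (c : ℝ) :
    ∃ L : AffineSubspace ℝ Plane, IsLine L ∧ ∀ z, z ∈ L ↔ ⟪v, z⟫ = c := by
  have : Fact (Module.finrank ℝ Plane = 1 + 1) := ⟨by simp⟩
  refine ⟨.mk' ((c / ⟪v, v⟫) • v) (ℝ ∙ v)ᗮ, ?_, fun z ↦ ?_⟩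
  · rw [IsLine, AffineSubspace.direction_mk',
      Submodule.finrank_orthogonal_span_singleton (n := 1) hv]
  · rw [AffineSubspace.mem_mk', vsub_eq_sub, Submodule.mem_orthogonal_singleton_iff_inner_right,
      inner_sub_right, real_inner_smul_right, div_mul_cancel₀ _ (inner_self_ne_zero.2 hv),
      sub_eq_zero]

theorem exists_isLine_forall_mem_iff_chord_eq_zero (R α β : ℝ) :
    ∃ L : AffineSubspace ℝ Plane, IsLine L ∧ ∀ z, z ∈ L ↔ chord R α β z = 0 := by
  have hne : circlePoint ((α + β) / 2) ≠ 0 := fun h ↦ by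
    simpa [h] using norm_circlePoint ((α + β) / 2)
  obtain ⟨L, hL, hmem⟩ := exists_isLine_forall_mem_iff hne (R * cos ((β - α) / 2))
  exact ⟨L, hL, fun z ↦ by rw [hmem, chord, sub_eq_zero, eq_comm]⟩

theorem IsLine.collinear {L : AffineSubspace ℝ Plane} (hL : IsLine L) :
    Collinear ℝ (L : Set Plane) := by
  rw [collinear_iff_finrank_le_one, ← AffineSubspace.direction_eq_vectorSpan]
  exact hL.le

theorem inter_nonempty_of_collinear {E : Type*} [AddCommGroup E] [Module ℝ E] {p q r : E}
    {H₀ H₁ H₂ : Set E} (h : Collinear ℝ {p, q, r}) (h₀ : Convex ℝ H₀) (h₁ : Convex ℝ H₁)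
    (h₂ : Convex ℝ H₂) (hp : p ∈ H₀ ∩ H₁) (hq : q ∈ H₀ ∩ H₂) (hr : r ∈ H₁ ∩ H₂) :
    (H₀ ∩ H₁ ∩ H₂).Nonempty := by
  obtain h | h | h := h.wbtw_or_wbtw_or_wbtw
  · exact ⟨q, ⟨hq.1, h₁.segment_subset hp.2 hr.1 h.mem_segment⟩, hq.2⟩
  · exact ⟨r, ⟨h₀.segment_subset hq.1 hp.1 h.mem_segment, hr.1⟩, hr.2⟩
  · exact ⟨p, hp, h₂.segment_subset hr.2 hq.2 h.mem_segment⟩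

theorem pos_of_isPreconnected_of_ne_zero {X : Type*} [TopologicalSpace X] {A : Set X}
    (hA : IsPreconnected A) {f : X → ℝ} (hf : ContinuousOn f A) (hne : ∀ x ∈ A, f x ≠ 0) {x y : X}
    (hx : x ∈ A) (hy : y ∈ A) (hpos : 0 < f x) : 0 < f y := by
  by_contra! hneg
  obtain ⟨z, hz, hfz⟩ := hA.intermediate_value hy hx hf ⟨hneg, hpos.le⟩
  exact hne z hz hfz

/-- The main diagonal through the vertices `k` and `k + 3` of the hexagon inscribed in the circle of
radius `R` whose vertices are at the angles `θ k`. -/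
def mainDiagonal (R : ℝ) (θ : ℕ → ℝ) (k : ℕ) (z : Plane) : ℝ := chord R (θ k) (θ (k + 3)) z

/-- The part of the disc next to the arc from `θ k` to `θ (k + 1)`: the points on the side of that
arc with respect to both diagonals that start at its ends. -/
def sector (R : ℝ) (θ : ℕ → ℝ) (k : ℕ) : Set Plane :=
  {z | mainDiagonal R θ k z < 0 ∧ 0 < mainDiagonal R θ (k + 1) z}

/-- The open triangle bounded by three consecutive main diagonals, for one of its two possible
orientations. -/
def diagonalTriangle (R : ℝ) (θ : ℕ → ℝ) (k : ℕ) : Set Plane :=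
  {p | mainDiagonal R θ k p < 0 ∧ 0 < mainDiagonal R θ (k + 1) p ∧ mainDiagonal R θ (k + 2) p < 0}

section Hexagon

variable {θ : ℕ → ℝ} {k : ℕ} {A B C : Set Plane}

theorem mainDiagonal_add_three (hθ : ∀ k, θ (k + 6) = θ k + 2 * π) (R : ℝ) (k : ℕ) (z : Plane) :
    mainDiagonal R θ (k + 3) z = -mainDiagonal R θ k z := by
  rw [mainDiagonal, add_assoc, hθ, chord_add_two_pi, mainDiagonal]

theorem lt_of_mem_sector (hθ : ∀ k, θ (k + 6) = θ k + 2 * π) (hmono : Monotone θ) (hz : ‖z‖ < R)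
    (hk : z ∈ sector R θ k) : θ k < θ (k + 1) := by
  refine (hmono k.le_succ).lt_of_ne fun heq ↦ hk.1.not_gt ?_
  have h := hk.2
  rw [mainDiagonal, ← heq] at h
  exact chord_pos_of_le hz (hmono (by omega)) (hmono (by omega))
    ((hmono (by omega)).trans (hθ k).le) h

theorem exists_mem_sector (hθ : ∀ k, θ (k + 6) = θ k + 2 * π)
    (h : ∀ k, mainDiagonal R θ k z ≠ 0) : ∃ k < 6, z ∈ sector R θ k := by
  by_contra! hno
  have hstep (k : ℕ) (hk : k < 6) (hneg : mainDiagonal R θ k z < 0) :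
      mainDiagonal R θ (k + 1) z < 0 := by
    by_contra! hpos
    exact hno k hk ⟨hneg, hpos.lt_of_ne (h _).symm⟩
  have hthree (k : ℕ) (hk : k < 4) (hneg : mainDiagonal R θ k z < 0) :
      mainDiagonal R θ (k + 3) z < 0 :=
    hstep (k + 2) (by omega) (hstep (k + 1) (by omega) (hstep k (by omega) hneg))
  have hflip (k : ℕ) := mainDiagonal_add_three hθ R k z
  obtain h₀ | h₀ := (h 0).lt_or_gt
  · linarith [hthree 0 (by omega) h₀, hflip 0]
  · have h₃ : mainDiagonal R θ 3 z < 0 := by linarith [hflip 0]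
    linarith [hthree 3 (by omega) h₃, hflip 3]

theorem continuous_mainDiagonal (R : ℝ) (θ : ℕ → ℝ) (k : ℕ) : Continuous (mainDiagonal R θ k) := by
  unfold mainDiagonal chord
  fun_prop

theorem exists_subset_sector (hθ : ∀ k, θ (k + 6) = θ k + 2 * π) (hA : IsPreconnected A)
    (hne : A.Nonempty) (h : ∀ k, ∀ z ∈ A, mainDiagonal R θ k z ≠ 0) :
    ∃ k < 6, A ⊆ sector R θ k := by
  obtain ⟨z, hz⟩ := hne
  obtain ⟨k, hk, hneg, hpos⟩ := exists_mem_sector hθ fun k ↦ h k z hz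
  refine ⟨k, hk, fun w hw ↦ ⟨?_, ?_⟩⟩
  · have hcont := (continuous_mainDiagonal R θ k).neg.continuousOn (s := A)
    simpa using pos_of_isPreconnected_of_ne_zero hA hcont (by simpa using h k) hz hw
      (neg_pos.2 hneg)
  · exact pos_of_isPreconnected_of_ne_zero hA (continuous_mainDiagonal R θ (k + 1)).continuousOn
      (h _) hz hw hpos

theorem diagonalTriangle_nonempty (hθ : ∀ k, θ (k + 6) = θ k + 2 * π)
    {L : AffineSubspace ℝ Plane} (hL : TransversalLine L {A, B, C}) (hA : A ⊆ sector R θ k)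
    (hB : B ⊆ sector R θ (k + 2)) (hC : C ⊆ sector R θ (k + 4)) :
    (diagonalTriangle R θ k).Nonempty := by
  obtain ⟨hline, hmeet⟩ := hL
  obtain ⟨a, haL, ha⟩ := hmeet A (by simp)
  obtain ⟨b, hbL, hb⟩ := hmeet B (by simp)
  obtain ⟨c, hcL, hc⟩ := hmeet C (by simp)
  have hcol : Collinear ℝ {a, b, c} :=
    hline.collinear.subset (by simp [Set.insert_subset_iff, haL, hbL, hcL])
  have hflip (j : ℕ) (z : Plane) := mainDiagonal_add_three hθ R j z
  obtain ⟨ha₀, ha₁⟩ := hA ha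
  obtain ⟨hb₂, hb₃⟩ := hB hb
  obtain ⟨hc₄, hc₅⟩ := hC hc
  rw [add_assoc, hflip, neg_pos] at hb₃
  rw [show k + 4 = k + 1 + 3 from rfl, hflip, neg_lt_zero] at hc₄
  rw [show k + 4 + 1 = k + 2 + 3 from rfl, hflip, neg_pos] at hc₅
  obtain ⟨p, ⟨hp₀, hp₁⟩, hp₂⟩ := inter_nonempty_of_collinear hcol
    (convex_chord_neg R _ _) (convex_chord_pos R _ _) (convex_chord_neg R _ _)
    ⟨ha₀, ha₁⟩ ⟨hb₃, hb₂⟩ ⟨hc₄, hc₅⟩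
  exact ⟨p, hp₀, hp₁, hp₂⟩

theorem diagonalTriangle_add_one_eq_empty (hθ : ∀ k, θ (k + 6) = θ k + 2 * π) (hmono : Monotone θ)
    (h : (diagonalTriangle R θ k).Nonempty) : diagonalTriangle R θ (k + 1) = ∅ := by
  obtain ⟨p, hp₀, hp₁, hp₂⟩ := h
  rw [Set.eq_empty_iff_forall_notMem]
  rintro q ⟨hq₁, hq₂, hq₃⟩
  rw [add_assoc, mainDiagonal_add_three hθ, neg_lt_zero] at hq₃
  let mid (j : ℕ) : ℝ := (θ j + θ (j + 3)) / 2
  have hmid (j : ℕ) : mid j ≤ mid (j + 1) := by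
    have := hmono (show j ≤ j + 1 by omega)
    have := hmono (show j + 3 ≤ j + 1 + 3 by omega)
    simp only [mid]
    linarith
  have hmid_le : mid (k + 2) ≤ mid k + π := by
    have := hmono (show k + 2 ≤ k + 3 by omega)
    have := hmono (show k + 2 + 3 ≤ k + 6 by omega)
    simp only [mid]
    linarith [hθ k]
  have hdiff (j : ℕ) :
      ⟪circlePoint (mid j), p - q⟫ = mainDiagonal R θ j q - mainDiagonal R θ j p := by
    simp only [mainDiagonal, chord, mid, inner_sub_right]
    ring
  have hpos : 0 < ⟪circlePoint (mid (k + 1)), p - q⟫ :=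
    inner_circlePoint_pos_of_le_of_le (hmid k) (hmid (k + 1)) hmid_le
      (by rw [hdiff]; linarith) (by rw [hdiff]; exact sub_pos.2 (hp₂.trans hq₂))
  rw [hdiff] at hpos
  exact (sub_pos.1 hpos).not_gt (hq₁.trans hp₁)

theorem not_forall_exists_subset_sector {G : Set (Set Plane)}
    (hθ : ∀ k, θ (k + 6) = θ k + 2 * π) (hmono : Monotone θ)
    (htrans : ∀ A ∈ G, ∀ B ∈ G, ∀ C ∈ G,
      ∃ L : AffineSubspace ℝ Plane, TransversalLine L {A, B, C}) :
    ¬ ∀ k < 6, ∃ A ∈ G, A ⊆ sector R θ k := fun h ↦ by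
  have hnonempty (k : ℕ) (hk : k < 2) : (diagonalTriangle R θ k).Nonempty := by
    obtain ⟨A, hAG, hA⟩ := h k (by omega)
    obtain ⟨B, hBG, hB⟩ := h (k + 2) (by omega)
    obtain ⟨C, hCG, hC⟩ := h (k + 4) (by omega)
    obtain ⟨L, hL⟩ := htrans A hAG B hBG C hCG
    exact diagonalTriangle_nonempty hθ hL hA hB hC
  exact (hnonempty 1 (by omega)).ne_empty
    (diagonalTriangle_add_one_eq_empty hθ hmono (hnonempty 0 (by omega)))

theorem exists_lines_or_subset_sector (hθ : ∀ k, θ (k + 6) = θ k + 2 * π) (R : ℝ) :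
    ∃ L : Fin 3 → AffineSubspace ℝ Plane, (∀ j, IsLine (L j)) ∧ ∀ A, IsPreconnected A →
      A.Nonempty → (∃ j, ((L j : Set Plane) ∩ A).Nonempty) ∨ ∃ k < 6, A ⊆ sector R θ k := by
  choose L hL hmem using fun j : Fin 3 ↦
    exists_isLine_forall_mem_iff_chord_eq_zero R (θ j) (θ (j + 3))
  refine ⟨L, hL, fun A hA hne ↦ or_iff_not_imp_left.2 fun hmiss ↦
    exists_subset_sector hθ hA hne fun k z hz ↦ ?_⟩
  induction k using Nat.strong_induction_on with | _ k ih
  obtain hk | ⟨k, rfl⟩ := (lt_or_ge k 3).imp_right Nat.exists_eq_add_of_le'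
  · exact fun h ↦ hmiss ⟨⟨k, hk⟩, z, (hmem ⟨k, hk⟩ z).2 h, hz⟩
  · rw [mainDiagonal_add_three hθ]
    exact neg_ne_zero.2 (ih k (by omega))

end Hexagon

/-- The angles of the vertices of the hexagon whose consecutive sides subtend the proportions `x`
of the full turn, continued periodically. -/
def hexagonAngle (x : Fin 6 → ℝ) (k : ℕ) : ℝ := 2 * π * ∑ l ∈ Finset.range k, x (Fin.ofNat 6 l)

theorem hexagonAngle_succ (x : Fin 6 → ℝ) (k : ℕ) :
    hexagonAngle x (k + 1) = hexagonAngle x k + 2 * π * x (Fin.ofNat 6 k) := by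
  rw [hexagonAngle, Finset.sum_range_succ, mul_add, hexagonAngle]

theorem hexagonAngle_add_six {x : Fin 6 → ℝ} (hx : ∑ i, x i = 1) (k : ℕ) :
    hexagonAngle x (k + 6) = hexagonAngle x k + 2 * π := by
  induction k with
  | zero =>
    rw [hexagonAngle, hexagonAngle, zero_add, Finset.sum_range_zero, mul_zero, zero_add,
      Finset.sum_range]
    simp only [Fin.ofNat_val_eq_self, hx, mul_one]
  | succ k ih =>
    have hper : Fin.ofNat 6 (k + 6) = Fin.ofNat 6 k := Fin.ext (Nat.add_mod_right k 6)
    rw [add_right_comm, hexagonAngle_succ, ih, hper, hexagonAngle_succ]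
    ring

theorem monotone_hexagonAngle {x : Fin 6 → ℝ} (hx : ∀ i, 0 ≤ x i) : Monotone (hexagonAngle x) :=
  monotone_nat_of_le_succ fun k ↦ by
    rw [hexagonAngle_succ]
    exact le_add_of_nonneg_right (mul_nonneg two_pi_pos.le (hx _))

theorem continuous_hexagonAngle (k : ℕ) : Continuous fun x ↦ hexagonAngle x k := by
  unfold hexagonAngle
  fun_prop

theorem isOpen_setOf_subset_sector {A : Set Plane} (hA : IsCompact A) (R : ℝ) (k : ℕ) :
    IsOpen {x | A ⊆ sector R (hexagonAngle x) k} := by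
  have hcont (j : ℕ) : Continuous fun p : (Fin 6 → ℝ) × Plane ↦
      mainDiagonal R (hexagonAngle p.1) j p.2 := by
    have := continuous_hexagonAngle
    have := continuous_circlePoint
    unfold mainDiagonal chord
    fun_prop
  have hopen : IsOpen {p : (Fin 6 → ℝ) × Plane | p.2 ∈ sector R (hexagonAngle p.1) k} :=
    (isOpen_lt (hcont k) continuous_const).inter (isOpen_lt continuous_const (hcont (k + 1)))
  exact isOpen_iff_eventually.2 fun x hx ↦ hA.eventually_forall_of_forall_eventually fun z hz ↦
    hopen.mem_nhds (hx hz)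

end Geometry

theorem eckhoff_four_lines_general (G : Set (Set Plane)) (hbdd : Bornology.IsBounded (⋃₀ G))
    (hcompact : ∀ A ∈ G, IsCompact A) (hconn : ∀ A ∈ G, IsPreconnected A)
    (htrans : ∀ A ∈ G, ∀ B ∈ G, ∀ C ∈ G,
      ∃ L : AffineSubspace ℝ Plane, TransversalLine L {A, B, C}) :
    ∃ L : Fin 3 → AffineSubspace ℝ Plane, (∀ j, IsLine (L j)) ∧
      ∀ A ∈ G, ∃ j, ((L j : Set Plane) ∩ A).Nonempty := by
  have hne : ∀ A ∈ G, A.Nonempty := fun A hA ↦ by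
    obtain ⟨L, -, hL⟩ := htrans A hA A hA A hA
    exact (hL A (by simp)).right
  obtain ⟨R, -, hR⟩ := hbdd.exists_pos_norm_lt
  by_contra! hno
  let U (i : Fin 6) : Set (Fin 6 → ℝ) := ⋃ A ∈ G, {x | A ⊆ sector R (hexagonAngle x) i}
  have hopen (i : Fin 6) : IsOpen (U i) :=
    isOpen_biUnion fun A hA ↦ isOpen_setOf_subset_sector (hcompact A hA) R i
  have hcover : stdSimplex ℝ (Fin 6) ⊆ ⋃ i, U i := fun x hx ↦ by
    obtain ⟨L, hL, hsector⟩ := exists_lines_or_subset_sector (hexagonAngle_add_six hx.2) R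
    obtain ⟨A, hA, hmiss⟩ := hno L hL
    obtain ⟨j, hj⟩ | ⟨k, hk, hAk⟩ := hsector A (hconn A hA) (hne A hA)
    · exact absurd (hmiss j) hj.ne_empty
    · exact mem_iUnion.2 ⟨⟨k, hk⟩, mem_biUnion hA hAk⟩
  have hface : ∀ i, ∀ x ∈ stdSimplex ℝ (Fin 6), x ∈ U i → 0 < x i := by
    intro i x hx hxU
    obtain ⟨A, hA, hAi⟩ := mem_iUnion₂.1 hxU
    obtain ⟨z, hz⟩ := hne A hA
    have hlt := lt_of_mem_sector (hexagonAngle_add_six hx.2) (monotone_hexagonAngle hx.1)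
      (hR z (mem_sUnion_of_mem hz hA)) (hAi hz)
    rw [hexagonAngle_succ, Fin.ofNat_val_eq_self, lt_add_iff_pos_right] at hlt
    exact pos_of_mul_pos_right hlt Real.two_pi_pos.le
  obtain ⟨x, hx, hxU⟩ := exists_mem_stdSimplex_forall_mem_of_isOpen hopen hcover hface
  exact not_forall_exists_subset_sector (hexagonAngle_add_six hx.2) (monotone_hexagonAngle hx.1)
    htrans fun k hk ↦ by simpa [U] using hxU ⟨k, hk⟩

/-- Eckhoff: if every three members of a planar family of convex bodies have a
common transversal line, then four lines suffice to meet every member. -/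
theorem eckhoff_four_lines (G : Set (Set Plane)) (hfin : G.Finite)
    (hbody : ∀ A ∈ G, ConvexBody2 A)
    (htrans : ∀ A ∈ G, ∀ B ∈ G, ∀ C ∈ G,
      ∃ L : AffineSubspace ℝ Plane, TransversalLine L {A, B, C}) :
    ∃ L₁ L₂ L₃ L₄ : AffineSubspace ℝ Plane,
      IsLine L₁ ∧ IsLine L₂ ∧ IsLine L₃ ∧ IsLine L₄ ∧
      ∀ A ∈ G, ((L₁ : Set Plane) ∩ A).Nonempty ∨ ((L₂ : Set Plane) ∩ A).Nonempty ∨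
        ((L₃ : Set Plane) ∩ A).Nonempty ∨ ((L₄ : Set Plane) ∩ A).Nonempty := by
  obtain ⟨L, hL, hmeet⟩ := eckhoff_four_lines_general G
    ((Bornology.isBounded_sUnion hfin).2 fun A hA ↦ (hbody A hA).2.1.isBounded)
    (fun A hA ↦ (hbody A hA).2.1) (fun A hA ↦ (hbody A hA).2.2.isPreconnected) htrans
  exact ⟨L 0, L 1, L 2, L 2, hL 0, hL 1, hL 2, hL 2, fun A hA ↦ by
    simpa [Fin.exists_fin_succ] using hmeet A hA⟩
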